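/- Let G be a finite simple graph with adjacency matrix A (over the reals). Let s⁺ and s⁻ denote the sum of the squares of the positive and of the negative eigenvalues of A, respectively, and let χvec(G) be the vector chromatic number of G. Then s⁻ ≤ (χvec(G) − 1) · s⁺. -/

import Mathlib

open Matrix Finset BigOperators

/-- The Frobenius (trace) inner product of two real matrices. -/
noncomputable def frob {n : ℕ} (M N : Matrix (Fin n) (Fin n) ℝ) : ℝ :=
  ∑ u, ∑ v, M u v * N u v

/-- The all-ones matrix. -/
noncomputable def matJ (n : ℕ) : Matrix (Fin n) (Fin n) ℝ :=
  Matrix.of fun _ _ => (1 : ℝ)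

/-- The vector chromatic number of `G`: the supremum of `⟨J, Z⟩` over all real symmetric,
entrywise nonnegative, positive semidefinite matrices `Z` with trace `1` whose entries vanish
on distinct non-adjacent pairs of vertices. -/
noncomputable def chiVec {n : ℕ} (G : SimpleGraph (Fin n)) [DecidableRel G.Adj] : ℝ :=
  sSup { x : ℝ | ∃ Z : Matrix (Fin n) (Fin n) ℝ,
    Z.IsSymm ∧ (∀ u v, 0 ≤ Z u v) ∧ Z.PosSemidef ∧ Z.trace = 1 ∧
    (∀ u v, u ≠ v → ¬ G.Adj u v → Z u v = 0) ∧ x = frob (matJ n) Z }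

/-- The adjacency matrix of a graph is hermitian (it is real symmetric). -/
theorem adjHerm {n : ℕ} (G : SimpleGraph (Fin n)) [DecidableRel G.Adj] :
    (G.adjMatrix ℝ).IsHermitian :=
  (Matrix.conjTranspose_eq_transpose_of_trivial _).trans G.isSymm_adjMatrix

/-- `s⁺`: the sum of the squares of the positive eigenvalues of the adjacency matrix,
counted with multiplicity. -/
noncomputable def sPlus {n : ℕ} (G : SimpleGraph (Fin n)) [DecidableRel G.Adj] : ℝ :=
  ∑ i, if 0 < (adjHerm G).eigenvalues i then ((adjHerm G).eigenvalues i) ^ 2 else 0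

/-- `s⁻`: the sum of the squares of the negative eigenvalues of the adjacency matrix,
counted with multiplicity. -/
noncomputable def sMinus {n : ℕ} (G : SimpleGraph (Fin n)) [DecidableRel G.Adj] : ℝ :=
  ∑ i, if (adjHerm G).eigenvalues i < 0 then ((adjHerm G).eigenvalues i) ^ 2 else 0

/-- `A⁺ = Σ_{θ>0} θ E_θ`: the positive part of the adjacency matrix, obtained from its
spectral decomposition. -/
noncomputable def Aplus {n : ℕ} (G : SimpleGraph (Fin n)) [DecidableRel G.Adj] :
    Matrix (Fin n) (Fin n) ℝ :=
  ((adjHerm G).eigenvectorUnitary : Matrix (Fin n) (Fin n) ℝ) *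
    diagonal (fun i => if 0 < (adjHerm G).eigenvalues i then (adjHerm G).eigenvalues i else 0) *
    star ((adjHerm G).eigenvectorUnitary : Matrix (Fin n) (Fin n) ℝ)

/-- `A⁻ = -Σ_{λ<0} λ E_λ`: the negative part of the adjacency matrix, obtained from its
spectral decomposition. -/
noncomputable def Aminus {n : ℕ} (G : SimpleGraph (Fin n)) [DecidableRel G.Adj] :
    Matrix (Fin n) (Fin n) ℝ :=
  ((adjHerm G).eigenvectorUnitary : Matrix (Fin n) (Fin n) ℝ) *
    diagonal (fun i => if (adjHerm G).eigenvalues i < 0 then -(adjHerm G).eigenvalues i else 0) *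
    star ((adjHerm G).eigenvectorUnitary : Matrix (Fin n) (Fin n) ℝ)

/-!
Write `A = A⁺ - A⁻` for the positive and negative parts of `A`. They are orthogonal for the
Frobenius product and agree on non-adjacent pairs, where both have the same square sum `W`; let
`P` and `Q` be their square sums over adjacent pairs, so that `s⁺ = P + W` and `s⁻ = Q + W`.

* For a positive semidefinite `Y`, the matrix `Y ⊙ Y` is positive semidefinite (Schur). Moving its
  entries at non-adjacent pairs to the diagonal adds a weighted Laplacian, so the result is still
  positive semidefinite; after normalization it is feasible for `χvec`. Hence `P ≤ (χvec - 1) W` and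
  `Q ≤ (χvec - 1) W`.
* Orthogonality says that the product of `A⁺` and `A⁻` over adjacent pairs is `-W`, so `W² ≤ P Q`
  by Cauchy-Schwarz.

Together these give `W ≤ (χvec - 1) P`, and adding `Q ≤ (χvec - 1) W` gives the theorem.
-/

section OrderedRing

variable {R : Type*} [CommRing R] [LinearOrder R] [IsStrictOrderedRing R]

theorem add_le_mul_add_of_sq_le_mul {k P Q W : R} (hP₀ : 0 ≤ P) (hW₀ : 0 ≤ W) (hP : P ≤ k * W)
    (hQ : Q ≤ k * W) (hW : W ^ 2 ≤ P * Q) : Q + W ≤ k * (P + W) := by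
  suffices W ≤ k * P by linarith
  obtain rfl | W_pos := hW₀.eq_or_lt
  · have P_eq_zero : P = 0 := by linarith
    simp [P_eq_zero]
  · refine le_of_mul_le_mul_right ?_ W_pos
    calc W * W = W ^ 2 := (sq W).symm
      _ ≤ P * Q := hW
      _ ≤ P * (k * W) := mul_le_mul_of_nonneg_left hQ hP₀
      _ = k * P * W := by ring

variable {V : Type*} [StarRing R] [TrivialStar R] {Z : Matrix V V R}

theorem two_mul_apply_le_diag_add_diag (hZ : Z.PosSemidef) (u v : V) :
    2 * Z u v ≤ Z u u + Z v v := by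
  have form_nonneg : 0 ≤ Z u u - Z u v + (Z v v - Z v u) := by
    simpa [dotProduct, mulVec, Fin.sum_univ_two, sub_eq_add_neg] using
      (hZ.submatrix ![u, v]).dotProduct_mulVec_nonneg ![1, -1]
  linarith [(isHermitian_iff_isSymm.mp hZ.isHermitian).apply u v]

theorem sum_sum_le_card_mul_trace [Fintype V] (hZ : Z.PosSemidef) :
    ∑ u, ∑ v, Z u v ≤ Fintype.card V * Z.trace := by
  have double_sum_le : 2 * ∑ u, ∑ v, Z u v ≤ 2 * (Fintype.card V * Z.trace) := calc
    2 * ∑ u, ∑ v, Z u v = ∑ u, ∑ v, 2 * Z u v := by simp only [mul_sum]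
    _ ≤ ∑ u, ∑ v, (Z u u + Z v v) :=
      sum_le_sum fun u _ ↦ sum_le_sum fun v _ ↦ two_mul_apply_le_diag_add_diag hZ u v
    _ = 2 * (Fintype.card V * Z.trace) := by
      simp only [sum_add_distrib, sum_const, card_univ, nsmul_eq_mul, ← mul_sum, Matrix.trace,
        diag_apply]
      ring
  linarith

end OrderedRing

section WeightedLaplacian

variable {V R : Type*} [Fintype V] [DecidableEq V]

/-- The Laplacian of the complete graph on `V` with edge weights `C`. The diagonal of `C` plays no
role, as it cancels. -/
def weightedLaplacian [AddCommGroup R] (C : Matrix V V R) : Matrix V V R :=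
  diagonal (fun u ↦ ∑ v, C u v) - C

theorem sum_sum_weightedLaplacian [AddCommGroup R] (C : Matrix V V R) :
    ∑ u, ∑ v, weightedLaplacian C u v = 0 := by
  simp [weightedLaplacian, diagonal_apply]

theorem trace_weightedLaplacian [AddCommGroup R] (C : Matrix V V R) :
    (weightedLaplacian C).trace = ∑ u, ∑ v, C u v - C.trace := by
  rw [weightedLaplacian, trace_sub, trace_diagonal]

theorem dotProduct_weightedLaplacian_mulVec [CommRing R] (C : Matrix V V R) (x : V → R) :
    x ⬝ᵥ weightedLaplacian C *ᵥ x = ∑ u, ∑ v, C u v * (x u * (x u - x v)) := by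
  rw [weightedLaplacian, sub_mulVec, dotProduct_sub]
  simp only [dotProduct, mulVec_diagonal]
  simp only [mulVec, dotProduct, mul_sum, sum_mul, ← sum_sub_distrib]
  exact sum_congr rfl fun u _ ↦ sum_congr rfl fun v _ ↦ by ring

theorem two_mul_dotProduct_weightedLaplacian_mulVec [CommRing R] {C : Matrix V V R}
    (hC : C.IsSymm) (x : V → R) :
    2 * (x ⬝ᵥ weightedLaplacian C *ᵥ x) = ∑ u, ∑ v, C u v * (x u - x v) ^ 2 := by
  have swap : x ⬝ᵥ weightedLaplacian C *ᵥ x = ∑ u, ∑ v, C u v * (x v * (x v - x u)) := by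
    rw [dotProduct_weightedLaplacian_mulVec, sum_comm]
    simp only [hC.apply]
  rw [two_mul]
  nth_rw 1 [dotProduct_weightedLaplacian_mulVec]
  rw [swap]
  simp only [← sum_add_distrib]
  exact sum_congr rfl fun u _ ↦ sum_congr rfl fun v _ ↦ by ring

theorem posSemidef_weightedLaplacian [CommRing R] [LinearOrder R] [IsStrictOrderedRing R]
    [StarRing R] [TrivialStar R] {C : Matrix V V R} (hC : C.IsSymm) (hC₀ : ∀ u v, 0 ≤ C u v) :
    (weightedLaplacian C).PosSemidef := by
  refine .of_dotProduct_mulVec_nonneg ?_ fun x ↦ ?_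
  · rw [IsHermitian, conjTranspose_eq_transpose_of_trivial, weightedLaplacian, transpose_sub,
      diagonal_transpose, hC.eq]
  · have two_mul_nonneg : 0 ≤ 2 * (x ⬝ᵥ weightedLaplacian C *ᵥ x) := by
      rw [two_mul_dotProduct_weightedLaplacian_mulVec hC]
      exact sum_nonneg fun u _ ↦ sum_nonneg fun v _ ↦ mul_nonneg (hC₀ u v) (sq_nonneg _)
    rw [star_trivial]
    linarith

end WeightedLaplacian

section FoldNonAdj

variable {V R : Type*} (G : SimpleGraph V) [DecidableRel G.Adj]

/-- The entries of `N` at non-adjacent pairs of vertices, diagonal included, and zero elsewhere. -/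
def nonAdjPart [Zero R] (N : Matrix V V R) : Matrix V V R :=
  of fun u v ↦ if G.Adj u v then 0 else N u v

theorem isSymm_nonAdjPart [Zero R] {N : Matrix V V R} (hN : N.IsSymm) :
    (nonAdjPart G N).IsSymm :=
  IsSymm.ext fun u v ↦ by simp only [nonAdjPart, of_apply, G.adj_comm, hN.apply]

theorem nonAdjPart_nonneg [Zero R] [Preorder R] {N : Matrix V V R} (hN₀ : ∀ u v, 0 ≤ N u v)
    (u v : V) : 0 ≤ nonAdjPart G N u v := by
  rw [nonAdjPart, of_apply]
  split_ifs
  exacts [le_rfl, hN₀ u v]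

variable [Fintype V]

theorem trace_nonAdjPart [AddCommMonoid R] (N : Matrix V V R) :
    (nonAdjPart G N).trace = N.trace := by
  simp [nonAdjPart, Matrix.trace]

theorem sum_sum_nonAdjPart [AddCommMonoid R] (N : Matrix V V R) :
    ∑ u, ∑ v, nonAdjPart G N u v = ∑ p : V × V with ¬ G.Adj p.1 p.2, N p.1 p.2 := by
  simp only [nonAdjPart, of_apply, sum_filter, ite_not, Fintype.sum_prod_type]

variable [DecidableEq V]

/-- The matrix `N` with each off-diagonal entry at a non-adjacent pair moved to the diagonal entry
of its row. It is written with a Laplacian because that makes positive semidefiniteness visible. -/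
def foldNonAdj [AddCommGroup R] (N : Matrix V V R) : Matrix V V R :=
  N + weightedLaplacian (nonAdjPart G N)

section AddCommGroup

variable [AddCommGroup R] (N : Matrix V V R)

theorem foldNonAdj_apply_of_ne {u v : V} (huv : u ≠ v) :
    foldNonAdj G N u v = if G.Adj u v then N u v else 0 := by
  simp only [foldNonAdj, weightedLaplacian, nonAdjPart, Matrix.add_apply, Matrix.sub_apply,
    of_apply, diagonal_apply_ne _ huv]
  split_ifs <;> simp

theorem sum_sum_foldNonAdj : ∑ u, ∑ v, foldNonAdj G N u v = ∑ u, ∑ v, N u v := by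
  simp only [foldNonAdj, Matrix.add_apply, sum_add_distrib, sum_sum_weightedLaplacian, add_zero]

theorem trace_foldNonAdj :
    (foldNonAdj G N).trace = ∑ p : V × V with ¬ G.Adj p.1 p.2, N p.1 p.2 := by
  rw [foldNonAdj, trace_add, trace_weightedLaplacian, trace_nonAdjPart, sum_sum_nonAdjPart,
    add_sub_cancel]

end AddCommGroup

variable [CommRing R] [LinearOrder R] [IsStrictOrderedRing R] [StarRing R] [TrivialStar R]
  {N : Matrix V V R}

theorem posSemidef_foldNonAdj (hN : N.PosSemidef) (hN₀ : ∀ u v, 0 ≤ N u v) :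
    (foldNonAdj G N).PosSemidef :=
  have hN_symm : N.IsSymm := isHermitian_iff_isSymm.mp hN.isHermitian
  hN.add (posSemidef_weightedLaplacian (isSymm_nonAdjPart G hN_symm) (nonAdjPart_nonneg G hN₀))

theorem foldNonAdj_nonneg (hN : N.PosSemidef) (hN₀ : ∀ u v, 0 ≤ N u v) (u v : V) :
    0 ≤ foldNonAdj G N u v := by
  obtain rfl | huv := eq_or_ne u v
  · exact (posSemidef_foldNonAdj G hN hN₀).diag_nonneg
  · rw [foldNonAdj_apply_of_ne G N huv]
    split_ifs
    exacts [hN₀ u v, le_rfl]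

end FoldNonAdj

section VectorChromaticNumber

variable {n : ℕ} (G : SimpleGraph (Fin n)) [DecidableRel G.Adj]

theorem frob_matJ (Z : Matrix (Fin n) (Fin n) ℝ) : frob (matJ n) Z = ∑ u, ∑ v, Z u v := by
  simp only [frob, matJ, of_apply, one_mul]

theorem sum_sum_le_chiVec_of_trace_eq_one {Z : Matrix (Fin n) (Fin n) ℝ} (hZ : Z.PosSemidef)
    (hZ₀ : ∀ u v, 0 ≤ Z u v) (hZG : ∀ u v, u ≠ v → ¬ G.Adj u v → Z u v = 0)
    (hZ_trace : Z.trace = 1) : ∑ u, ∑ v, Z u v ≤ chiVec G := by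
  refine le_csSup ⟨n, ?_⟩
    ⟨Z, isHermitian_iff_isSymm.mp hZ.isHermitian, hZ₀, hZ, hZ_trace, hZG, (frob_matJ Z).symm⟩
  rintro _ ⟨W, -, -, hW, hW_trace, -, rfl⟩
  simpa [frob_matJ, hW_trace] using sum_sum_le_card_mul_trace hW

theorem sum_sum_le_chiVec_mul_trace {Z : Matrix (Fin n) (Fin n) ℝ} (hZ : Z.PosSemidef)
    (hZ₀ : ∀ u v, 0 ≤ Z u v) (hZG : ∀ u v, u ≠ v → ¬ G.Adj u v → Z u v = 0) :
    ∑ u, ∑ v, Z u v ≤ chiVec G * Z.trace := by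
  obtain trace_eq_zero | trace_pos := hZ.trace_nonneg.eq_or_lt'
  · simp [hZ.trace_eq_zero_iff.mp trace_eq_zero]
  · have trace_inv_nonneg : 0 ≤ Z.trace⁻¹ := inv_nonneg.mpr trace_pos.le
    have normalized_le := sum_sum_le_chiVec_of_trace_eq_one G (hZ.smul trace_inv_nonneg)
      (fun u v ↦ mul_nonneg trace_inv_nonneg (hZ₀ u v))
      (fun u v huv hadj ↦ by rw [Matrix.smul_apply, hZG u v huv hadj, smul_zero])
      (by rw [trace_smul, smul_eq_mul, inv_mul_cancel₀ trace_pos.ne'])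
    simp only [Matrix.smul_apply, smul_eq_mul, ← mul_sum] at normalized_le
    rwa [inv_mul_le_iff₀ trace_pos, mul_comm] at normalized_le

theorem sum_sum_le_chiVec_mul_sum_not_adj {N : Matrix (Fin n) (Fin n) ℝ} (hN : N.PosSemidef)
    (hN₀ : ∀ u v, 0 ≤ N u v) :
    ∑ u, ∑ v, N u v ≤ chiVec G * ∑ p : Fin n × Fin n with ¬ G.Adj p.1 p.2, N p.1 p.2 := by
  rw [← sum_sum_foldNonAdj G, ← trace_foldNonAdj]
  exact sum_sum_le_chiVec_mul_trace G (posSemidef_foldNonAdj G hN hN₀) (foldNonAdj_nonneg G hN hN₀)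
    fun u v huv hadj ↦ by rw [foldNonAdj_apply_of_ne G N huv, if_neg hadj]

theorem frob_eq_sum_adj_add_sum_not_adj (M N : Matrix (Fin n) (Fin n) ℝ) :
    frob M N = ∑ p : Fin n × Fin n with G.Adj p.1 p.2, M p.1 p.2 * N p.1 p.2 +
      ∑ p : Fin n × Fin n with ¬ G.Adj p.1 p.2, M p.1 p.2 * N p.1 p.2 := by
  rw [sum_filter_add_sum_filter_not, Fintype.sum_prod_type, frob]

theorem sum_adj_sq_le_chiVec_sub_one_mul_sum_not_adj_sq {Y : Matrix (Fin n) (Fin n) ℝ}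
    (hY : Y.PosSemidef) :
    ∑ p : Fin n × Fin n with G.Adj p.1 p.2, Y p.1 p.2 ^ 2 ≤
      (chiVec G - 1) * ∑ p : Fin n × Fin n with ¬ G.Adj p.1 p.2, Y p.1 p.2 ^ 2 := by
  have frob_le : frob Y Y ≤ chiVec G * ∑ p : Fin n × Fin n with ¬ G.Adj p.1 p.2, Y p.1 p.2 ^ 2 := by
    simpa only [hadamard_apply, frob, sq] using
      sum_sum_le_chiVec_mul_sum_not_adj G (hY.hadamard hY) fun u v ↦ mul_self_nonneg (Y u v)
  simp only [frob_eq_sum_adj_add_sum_not_adj G, ← sq] at frob_le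
  linarith

theorem frob_self_le_chiVec_sub_one_mul_frob_self {X Y : Matrix (Fin n) (Fin n) ℝ}
    (hX : X.PosSemidef) (hY : Y.PosSemidef) (hXY : ∀ u v, ¬ G.Adj u v → X u v = Y u v)
    (orthogonal : frob X Y = 0) : frob Y Y ≤ (chiVec G - 1) * frob X X := by
  let adjPairs : Finset (Fin n × Fin n) := {p | G.Adj p.1 p.2}
  let nonAdjPairs : Finset (Fin n × Fin n) := {p | ¬ G.Adj p.1 p.2}
  set P := ∑ p ∈ adjPairs, X p.1 p.2 ^ 2
  set Q := ∑ p ∈ adjPairs, Y p.1 p.2 ^ 2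
  set W := ∑ p ∈ nonAdjPairs, Y p.1 p.2 ^ 2
  have eq_of_mem : ∀ p ∈ nonAdjPairs, X p.1 p.2 = Y p.1 p.2 := fun p hp ↦
    hXY p.1 p.2 (mem_filter.mp hp).2
  have sum_X_sq : ∑ p ∈ nonAdjPairs, X p.1 p.2 ^ 2 = W :=
    sum_congr rfl fun p hp ↦ by rw [eq_of_mem p hp]
  have sum_X_mul_Y : ∑ p ∈ nonAdjPairs, X p.1 p.2 * Y p.1 p.2 = W :=
    sum_congr rfl fun p hp ↦ by rw [eq_of_mem p hp, sq]
  have frob_X : frob X X = P + W := by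
    simp only [frob_eq_sum_adj_add_sum_not_adj G, ← sq, ← sum_X_sq, P, adjPairs, nonAdjPairs]
  have frob_Y : frob Y Y = Q + W := by
    simp only [frob_eq_sum_adj_add_sum_not_adj G, ← sq, Q, W, adjPairs, nonAdjPairs]
  have adj_product : ∑ p ∈ adjPairs, X p.1 p.2 * Y p.1 p.2 = -W := by
    rw [frob_eq_sum_adj_add_sum_not_adj G, sum_X_mul_Y] at orthogonal
    exact eq_neg_of_add_eq_zero_left orthogonal
  have W_sq_le : W ^ 2 ≤ P * Q := by
    rw [← neg_sq, ← adj_product]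
    exact sum_mul_sq_le_sq_mul_sq _ _ _
  have P_le : P ≤ (chiVec G - 1) * W :=
    sum_X_sq ▸ sum_adj_sq_le_chiVec_sub_one_mul_sum_not_adj_sq G hX
  have Q_le : Q ≤ (chiVec G - 1) * W := sum_adj_sq_le_chiVec_sub_one_mul_sum_not_adj_sq G hY
  rw [frob_X, frob_Y]
  exact add_le_mul_add_of_sq_le_mul (sum_nonneg fun _ _ ↦ sq_nonneg _)
    (sum_nonneg fun _ _ ↦ sq_nonneg _) P_le Q_le W_sq_le

end VectorChromaticNumber

section SpectralParts

section RCLike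

variable {V 𝕜 : Type*} [Fintype V] [DecidableEq V] [RCLike 𝕜]

theorem trace_cfc {A : Matrix V V 𝕜} (hA : A.IsHermitian) (f : ℝ → ℝ) :
    (cfc f A).trace = ∑ i, (f (hA.eigenvalues i) : 𝕜) := by
  rw [hA.cfc_eq, IsHermitian.cfc, Unitary.conjStarAlgAut_apply, trace_mul_comm, ← Matrix.mul_assoc,
    Unitary.coe_star_mul_self, Matrix.one_mul, trace_diagonal]
  rfl

open scoped ComplexOrder MatrixOrder in
theorem posSemidef_posPart (A : Matrix V V 𝕜) : A⁺.PosSemidef :=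
  (CFC.posPart_nonneg A).posSemidef

open scoped ComplexOrder MatrixOrder in
theorem posSemidef_negPart (A : Matrix V V 𝕜) : A⁻.PosSemidef :=
  (CFC.negPart_nonneg A).posSemidef

end RCLike

variable {n : ℕ} {A : Matrix (Fin n) (Fin n) ℝ}

theorem frob_eq_trace_mul (M : Matrix (Fin n) (Fin n) ℝ) {N : Matrix (Fin n) (Fin n) ℝ}
    (hN : N.IsSymm) : frob M N = (M * N).trace := by
  simp only [frob, Matrix.trace, diag_apply, mul_apply, hN.apply]

theorem frob_cfc_self (hA : A.IsHermitian) (f : ℝ → ℝ) :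
    frob (cfc f A) (cfc f A) = ∑ i, f (hA.eigenvalues i) ^ 2 := by
  have continuousOn_spectrum : ContinuousOn f (spectrum ℝ A) := by
    rw [hA.spectrum_real_eq_range_eigenvalues]
    exact (Set.finite_range _).continuousOn _
  rw [frob_eq_trace_mul _ (isHermitian_iff_isSymm.mp (cfc_predicate f A)), ← cfc_mul f f A,
    trace_cfc hA]
  simp [sq]

theorem frob_posPart_self (hA : A.IsHermitian) :
    frob A⁺ A⁺ = ∑ i, if 0 < hA.eigenvalues i then hA.eigenvalues i ^ 2 else 0 := by
  rw [CFC.posPart_def, cfcₙ_eq_cfc, frob_cfc_self hA]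
  refine sum_congr rfl fun i _ ↦ ?_
  split_ifs with h
  · rw [posPart_of_nonneg h.le]
  · rw [posPart_of_nonpos (not_lt.mp h), zero_pow two_ne_zero]

theorem frob_negPart_self (hA : A.IsHermitian) :
    frob A⁻ A⁻ = ∑ i, if hA.eigenvalues i < 0 then hA.eigenvalues i ^ 2 else 0 := by
  rw [CFC.negPart_def, cfcₙ_eq_cfc, frob_cfc_self hA]
  refine sum_congr rfl fun i _ ↦ ?_
  split_ifs with h
  · rw [negPart_of_nonpos h.le, neg_sq]
  · rw [negPart_of_nonneg (not_lt.mp h), zero_pow two_ne_zero]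

theorem frob_posPart_negPart (A : Matrix (Fin n) (Fin n) ℝ) : frob A⁺ A⁻ = 0 := by
  have negPart_isSymm : A⁻.IsSymm := isHermitian_iff_isSymm.mp (posSemidef_negPart A).isHermitian
  rw [frob_eq_trace_mul _ negPart_isSymm, CFC.posPart_mul_negPart, trace_zero]

end SpectralParts

theorem sMinus_le_chiVec_sub_one_mul_sPlus_general {n : ℕ} (G : SimpleGraph (Fin n))
    [DecidableRel G.Adj] {A : Matrix (Fin n) (Fin n) ℝ} (hA : A.IsHermitian)
    (hAG : ∀ u v, ¬ G.Adj u v → A u v = 0) :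
    (∑ i, if hA.eigenvalues i < 0 then hA.eigenvalues i ^ 2 else 0) ≤
      (chiVec G - 1) * ∑ i, if 0 < hA.eigenvalues i then hA.eigenvalues i ^ 2 else 0 := by
  have parts_eq (u v) (huv : ¬ G.Adj u v) : A⁺ u v = A⁻ u v := by
    rw [← sub_eq_zero, ← Matrix.sub_apply, CFC.posPart_sub_negPart A hA, hAG u v huv]
  rw [← frob_negPart_self, ← frob_posPart_self]
  exact frob_self_le_chiVec_sub_one_mul_frob_self G (posSemidef_posPart A) (posSemidef_negPart A)
    parts_eq (frob_posPart_negPart A)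

/-- For every graph `G`, `s⁻ ≤ (χvec(G) − 1) · s⁺`. -/
theorem sMinus_le_chiVec_sub_one_mul_sPlus {n : ℕ} (G : SimpleGraph (Fin n))
    [DecidableRel G.Adj] :
    sMinus G ≤ (chiVec G - 1) * sPlus G :=
  sMinus_le_chiVec_sub_one_mul_sPlus_general G (adjHerm G) fun u v huv ↦ by
    rw [G.adjMatrix_apply, if_neg huv]
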